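/- Let G be a finite graph with symmetric edge weights and Ω a finite subset of vertices. For θ ∈ [0,1) and p = 2/θ ∈ [2,∞] (with p = ∞ when θ = 0), the Dirichlet-to-Neumann operator satisfies ‖Λ‖_{p,p} ≤ 2^{1−θ}; that is, for every φ : δΩ → ℝ, ‖Λφ‖_{ℓ^p(δΩ,m)} ≤ 2^{1−θ} ‖φ‖_{ℓ^p(δΩ,m)}. -/

import Mathlib

open scoped Classical
open Finset

variable {V : Type*} [Fintype V]

/-- The vertex boundary δΩ of a finite set Ω of vertices. -/
noncomputable def bdry (μ : V → V → ℝ) (Ω : Finset V) : Finset V :=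
  Finset.univ.filter fun x => x ∉ Ω ∧ ∃ y ∈ Ω, 0 < μ x y

/-- Ω̄ = Ω ∪ δΩ. -/
noncomputable def clos (μ : V → V → ℝ) (Ω : Finset V) : Finset V :=
  Ω ∪ bdry μ Ω

/-- The vertex measure m on Ω̄. -/
noncomputable def vm (μ : V → V → ℝ) (Ω : Finset V) (x : V) : ℝ :=
  if x ∈ Ω then ∑ y, μ x y else ∑ y ∈ Ω, μ x y

/-- m(B) = Σ_{x ∈ B} m_x. -/
noncomputable def msum (μ : V → V → ℝ) (Ω : Finset V) (B : Finset V) : ℝ :=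
  ∑ x ∈ B, vm μ Ω x

/-- Sum over the edges e = {x,y} of E(Ω,Ω̄) of μ_{xy} · F x y (for symmetric F). -/
noncomputable def edgeSum (μ : V → V → ℝ) (Ω : Finset V) (F : V → V → ℝ) : ℝ :=
  (∑ x ∈ Ω, ∑ y ∈ Ω, μ x y * F x y) / 2 +
    ∑ x ∈ Ω, ∑ y ∈ bdry μ Ω, μ x y * F x y

/-- Dirichlet energy D_Ω(f). -/
noncomputable def dirichlet (μ : V → V → ℝ) (Ω : Finset V) (f : V → ℝ) : ℝ :=
  edgeSum μ Ω fun x y => (f x - f y) ^ 2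

/-- Dirichlet form D_Ω(f,g). -/
noncomputable def dform (μ : V → V → ℝ) (Ω : Finset V) (f g : V → ℝ) : ℝ :=
  edgeSum μ Ω fun x y => (f x - f y) * (g x - g y)

/-- μ(∂_Ω A): total weight of the edges of E(Ω,Ω̄) with exactly one endpoint in A. -/
noncomputable def cut (μ : V → V → ℝ) (Ω : Finset V) (A : Finset V) : ℝ :=
  edgeSum μ Ω fun x y => if (x ∈ A) ↔ (y ∈ A) then 0 else 1

/-- The graph Laplacian Δf(x) (used for x ∈ Ω). -/
noncomputable def lap (μ : V → V → ℝ) (Ω : Finset V) (f : V → ℝ) (x : V) : ℝ :=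
  (∑ y, μ x y * (f y - f x)) / vm μ Ω x

/-- The outward normal derivative ∂f/∂n(z) (used for z ∈ δΩ). -/
noncomputable def nderiv (μ : V → V → ℝ) (Ω : Finset V) (f : V → ℝ) (z : V) : ℝ :=
  (∑ x ∈ Ω, μ z x * (f z - f x)) / vm μ Ω z

/-- f is harmonic on Ω. -/
def IsHarmonic (μ : V → V → ℝ) (Ω : Finset V) (u : V → ℝ) : Prop :=
  ∀ x ∈ Ω, lap μ Ω u x = 0

/-- Adjacency in the graph Ω̃ = (Ω̄, E(Ω,Ω̄)). -/
def tilAdj (μ : V → V → ℝ) (Ω : Finset V) (x y : V) : Prop :=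
  0 < μ x y ∧ (x ∈ Ω ∨ y ∈ Ω)

/-- The graph Ω̃ is connected. -/
def TilConnected (μ : V → V → ℝ) (Ω : Finset V) : Prop :=
  ∀ x ∈ clos μ Ω, ∀ y ∈ clos μ Ω, Relation.ReflTransGen (tilAdj μ Ω) x y

/-- λ₁(Ω): the first nontrivial eigenvalue of the Dirichlet-to-Neumann operator,
characterized by its Rayleigh quotient. -/
noncomputable def lambda1 (μ : V → V → ℝ) (Ω : Finset V) : ℝ :=
  sInf { r : ℝ | ∃ u : V → ℝ, IsHarmonic μ Ω u ∧
    (∑ x ∈ bdry μ Ω, u x ^ 2 * vm μ Ω x) = 1 ∧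
    (∑ x ∈ bdry μ Ω, u x * vm μ Ω x) = 0 ∧
    r = dirichlet μ Ω u }

/-- The Escobar-type Cheeger constant h_E(Ω̃). -/
noncomputable def hE (μ : V → V → ℝ) (Ω : Finset V) : ℝ :=
  sInf { r : ℝ | ∃ A : Finset V, A ⊆ clos μ Ω ∧
    0 < msum μ Ω (A ∩ bdry μ Ω) ∧
    msum μ Ω (A ∩ bdry μ Ω) ≤ msum μ Ω (bdry μ Ω) / 2 ∧
    r = cut μ Ω A / msum μ Ω (A ∩ bdry μ Ω) }

/-- The Jammes-type Cheeger constant h_J(Ω̃). -/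
noncomputable def hJ (μ : V → V → ℝ) (Ω : Finset V) : ℝ :=
  sInf { r : ℝ | ∃ A : Finset V, A ⊆ clos μ Ω ∧
    (A ∩ bdry μ Ω).Nonempty ∧
    msum μ Ω A ≤ msum μ Ω (clos μ Ω) / 2 ∧
    r = cut μ Ω A / msum μ Ω (A ∩ bdry μ Ω) }

/-- The classical Cheeger constant h(Ω̃). -/
noncomputable def cheeger (μ : V → V → ℝ) (Ω : Finset V) : ℝ :=
  sInf { r : ℝ | ∃ A : Finset V, A ⊆ clos μ Ω ∧ A.Nonempty ∧
    msum μ Ω A ≤ msum μ Ω (clos μ Ω) / 2 ∧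
    r = cut μ Ω A / msum μ Ω A }


lemma mu_zero (μ : V → V → ℝ) (Ω : Finset V)
    (hsym : ∀ x y, μ x y = μ y x) (hnn : ∀ x y, 0 ≤ μ x y) {x y : V} (hx : x ∈ Ω)
    (hy : y ∉ Ω) (hyb : y ∉ bdry μ Ω) : μ x y = 0 := by
  by_contra h
  apply hyb
  simp only [bdry, Finset.mem_filter, Finset.mem_univ, true_and]
  refine ⟨hy, x, hx, ?_⟩
  rw [hsym]
  exact lt_of_le_of_ne (hnn x y) (Ne.symm h)

lemma sum_split (μ : V → V → ℝ) (Ω : Finset V)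
    (hsym : ∀ x y, μ x y = μ y x) (hnn : ∀ x y, 0 ≤ μ x y) {x : V} (hx : x ∈ Ω)
    (F : V → ℝ) : ∑ y, μ x y * F y = ∑ y ∈ Ω, μ x y * F y + ∑ y ∈ bdry μ Ω, μ x y * F y := by
  have hd : Disjoint Ω (bdry μ Ω) := by
    rw [Finset.disjoint_left]
    intro a ha hb
    simp only [bdry, Finset.mem_filter] at hb
    exact hb.2.1 ha
  rw [← Finset.sum_union hd]
  symm
  apply Finset.sum_subset (Finset.subset_univ _)
  intro y _ hy
  rw [Finset.mem_union, not_or] at hy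
  rw [mu_zero μ Ω hsym hnn hx hy.1 hy.2, zero_mul]

lemma vm_bdry (μ : V → V → ℝ) (Ω : Finset V) {x : V} (hx : x ∈ bdry μ Ω) :
    vm μ Ω x = ∑ y ∈ Ω, μ x y := by
  simp only [bdry, Finset.mem_filter] at hx
  simp [vm, hx.2.1]

lemma harm_iff (μ : V → V → ℝ) (Ω : Finset V)
    (hm : ∀ x ∈ clos μ Ω, 0 < vm μ Ω x) (u : V → ℝ) :
    IsHarmonic μ Ω u ↔ ∀ x ∈ Ω, ∑ y, μ x y * (u y - u x) = 0 := by
  unfold IsHarmonic lap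
  refine forall₂_congr fun x hx => ?_
  have := hm x (Finset.mem_union_left _ hx)
  rw [div_eq_zero_iff]
  simp [this.ne']

lemma exists_harm (μ : V → V → ℝ) (Ω : Finset V) (hnn : ∀ x y, 0 ≤ μ x y)
    (hm : ∀ x ∈ clos μ Ω, 0 < vm μ Ω x) (f : V → ℝ) (C : ℝ) (hC : 0 ≤ C)
    (hf : ∀ y ∈ bdry μ Ω, |f y| ≤ C) :
    ∃ v : V → ℝ, IsHarmonic μ Ω v ∧ (∀ x, |v x| ≤ C) ∧ ∀ y ∈ bdry μ Ω, v y = f y := by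
  have hvm : ∀ x ∈ Ω, vm μ Ω x = ∑ y, μ x y := fun x hx => by simp [vm, hx]
  have hpos : ∀ x ∈ Ω, 0 < vm μ Ω x := fun x hx => hm x (Finset.mem_union_left _ hx)
  let g : V → ℝ := fun y => if y ∈ bdry μ Ω then f y else 0
  have hg : ∀ y, g y ∈ Set.Icc (-C) C := by
    intro y
    by_cases h : y ∈ bdry μ Ω
    · simpa [g, h] using abs_le.1 (hf y h)
    · simp [g, h, hC]
  have : Fact (-C ≤ C) := ⟨by linarith⟩
  let S : (V → ℝ) → V → ℝ := fun w x => if x ∈ Ω then (∑ y, μ x y * w y) / vm μ Ω x else g x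
  have hS : ∀ w : V → ℝ, (∀ y, w y ∈ Set.Icc (-C) C) → ∀ x, S w x ∈ Set.Icc (-C) C := by
    intro w hw x
    by_cases hx : x ∈ Ω
    · simp only [S, hx, if_true, Set.mem_Icc]
      rw [le_div_iff₀ (hpos x hx), div_le_iff₀ (hpos x hx), hvm x hx, Finset.mul_sum,
        Finset.mul_sum]
      constructor
      · refine Finset.sum_le_sum fun y _ => ?_
        nlinarith [hnn x y, (hw y).1]
      · refine Finset.sum_le_sum fun y _ => ?_
        nlinarith [hnn x y, (hw y).2]
    · simpa only [S, hx, if_false] using hg x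
  let T : (V → Set.Icc (-C) C) →o (V → Set.Icc (-C) C) :=
    { toFun := fun w x => ⟨S (fun y => (w y : ℝ)) x, hS _ (fun y => (w y).2) x⟩
      monotone' := by
        intro w w' h x
        rw [Subtype.mk_le_mk]
        by_cases hx : x ∈ Ω
        · simp only [S, hx, if_true]
          refine div_le_div_of_nonneg_right ?_ (hpos x hx).le
          refine Finset.sum_le_sum fun y _ => ?_
          exact mul_le_mul_of_nonneg_left (h y) (hnn x y)
        · simp only [S, hx, if_false, le_refl] }
  have hT := T.map_lfp
  set w := OrderHom.lfp T with hw
  have hfix : ∀ x, S (fun y => (w y : ℝ)) x = w x := fun x => congrArg Subtype.val (congrFun hT x)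
  refine ⟨fun x => w x, ?_, fun x => abs_le.2 (w x).2, ?_⟩
  · rw [harm_iff μ Ω hm]
    intro x hx
    have h := hfix x
    simp only [S, hx, if_true] at h
    rw [div_eq_iff (hpos x hx).ne', hvm x hx] at h
    simp only [mul_sub, Finset.sum_sub_distrib, h, Finset.mul_sum]
    rw [sub_eq_zero]
    exact Finset.sum_congr rfl fun y _ => mul_comm _ _
  · intro y hy
    have h := hfix y
    have hy' : y ∉ Ω := by
      simp only [bdry, Finset.mem_filter] at hy
      exact hy.2.1
    simp only [S, hy', if_false, g, hy, if_true] at h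
    exact h.symm

lemma l2_bound (μ : V → V → ℝ) (Ω : Finset V)
    (hsym : ∀ x y, μ x y = μ y x) (hnn : ∀ x y, 0 ≤ μ x y)
    (hm : ∀ x ∈ clos μ Ω, 0 < vm μ Ω x) (u : V → ℝ) (hu : IsHarmonic μ Ω u) :
    ∑ x ∈ bdry μ Ω, nderiv μ Ω u x ^ 2 * vm μ Ω x ≤ ∑ x ∈ bdry μ Ω, u x ^ 2 * vm μ Ω x := by
  rw [harm_iff μ Ω hm] at hu
  have hpos : ∀ x ∈ bdry μ Ω, 0 < vm μ Ω x := fun x hx => hm x (Finset.mem_union_right _ hx)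
  have hg : ∀ z ∈ bdry μ Ω, nderiv μ Ω u z * vm μ Ω z = ∑ x ∈ Ω, μ z x * (u z - u x) :=
    fun z hz => by rw [nderiv, div_mul_cancel₀ _ (hpos z hz).ne']
  -- Jensen at each boundary vertex
  have h1 : ∀ z ∈ bdry μ Ω, nderiv μ Ω u z ^ 2 * vm μ Ω z ≤ ∑ x ∈ Ω, μ z x * (u z - u x) ^ 2 := by
    intro z hz
    have cs := Finset.sum_sq_le_sum_mul_sum_of_sq_eq_mul Ω (r := fun x => μ z x * (u z - u x))
      (f := fun x => μ z x) (g := fun x => μ z x * (u z - u x) ^ 2)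
      (fun x _ => hnn z x) (fun x _ => mul_nonneg (hnn z x) (sq_nonneg _))
      (fun x _ => by ring)
    rw [← hg z hz, ← vm_bdry μ Ω hz] at cs
    have hp := hpos z hz
    refine le_of_mul_le_mul_left ?_ hp
    calc _ = (nderiv μ Ω u z * vm μ Ω z) ^ 2 := by ring
      _ ≤ _ := cs
  -- interior energy
  have h2 : 0 ≤ ∑ z ∈ bdry μ Ω, ∑ x ∈ Ω, μ z x * (u z - u x) * u x := by
    have e1 : ∑ z ∈ bdry μ Ω, ∑ x ∈ Ω, μ z x * (u z - u x) * u x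
        = ∑ x ∈ Ω, ∑ y ∈ Ω, μ x y * (u x - u y) * u x := by
      rw [Finset.sum_comm]
      refine Finset.sum_congr rfl fun x hx => ?_
      have h := hu x hx
      rw [sum_split μ Ω hsym hnn hx] at h
      rw [← Finset.sum_mul, ← Finset.sum_mul]
      congr 1
      have : ∑ y ∈ Ω, μ x y * (u x - u y) = - ∑ y ∈ Ω, μ x y * (u y - u x) := by
        rw [← Finset.sum_neg_distrib]
        exact Finset.sum_congr rfl fun y _ => by ring
      rw [this]
      have : ∑ z ∈ bdry μ Ω, μ z x * (u z - u x) = ∑ z ∈ bdry μ Ω, μ x z * (u z - u x) :=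
        Finset.sum_congr rfl fun y _ => by rw [hsym]
      rw [this]
      linarith
    have e2 : ∑ x ∈ Ω, ∑ y ∈ Ω, μ x y * (u x - u y) * u x
        = ∑ x ∈ Ω, ∑ y ∈ Ω, - (μ x y * (u x - u y) * u y) := by
      rw [Finset.sum_comm]
      refine Finset.sum_congr rfl fun x _ => Finset.sum_congr rfl fun y _ => ?_
      rw [hsym y x]; ring
    have e3 : 0 ≤ ∑ x ∈ Ω, ∑ y ∈ Ω, μ x y * (u x - u y) * u x
        + ∑ x ∈ Ω, ∑ y ∈ Ω, - (μ x y * (u x - u y) * u y) := by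
      rw [← Finset.sum_add_distrib]
      refine Finset.sum_nonneg fun x _ => ?_
      rw [← Finset.sum_add_distrib]
      refine Finset.sum_nonneg fun y _ => ?_
      have := mul_nonneg (hnn x y) (sq_nonneg (u x - u y))
      linarith
    rw [e1]
    linarith
  have h3 : ∑ z ∈ bdry μ Ω, nderiv μ Ω u z ^ 2 * vm μ Ω z
      ≤ ∑ z ∈ bdry μ Ω, nderiv μ Ω u z * vm μ Ω z * u z := by
    calc _ ≤ ∑ z ∈ bdry μ Ω, ∑ x ∈ Ω, μ z x * (u z - u x) ^ 2 := Finset.sum_le_sum h1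
      _ ≤ ∑ z ∈ bdry μ Ω, ∑ x ∈ Ω, μ z x * (u z - u x) ^ 2
          + ∑ z ∈ bdry μ Ω, ∑ x ∈ Ω, μ z x * (u z - u x) * u x := by linarith
      _ = _ := by
        rw [← Finset.sum_add_distrib]
        refine Finset.sum_congr rfl fun z hz => ?_
        rw [hg z hz, ← Finset.sum_add_distrib, Finset.sum_mul]
        exact Finset.sum_congr rfl fun x _ => by ring
  have h4 : 0 ≤ ∑ z ∈ bdry μ Ω, (u z - nderiv μ Ω u z) ^ 2 * vm μ Ω z :=
    Finset.sum_nonneg fun z hz => mul_nonneg (sq_nonneg _) (hpos z hz).le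
  have h5 : ∑ z ∈ bdry μ Ω, (u z - nderiv μ Ω u z) ^ 2 * vm μ Ω z
      = ∑ x ∈ bdry μ Ω, u x ^ 2 * vm μ Ω x
        - 2 * ∑ z ∈ bdry μ Ω, nderiv μ Ω u z * vm μ Ω z * u z
        + ∑ z ∈ bdry μ Ω, nderiv μ Ω u z ^ 2 * vm μ Ω z := by
    rw [Finset.mul_sum, ← Finset.sum_sub_distrib, ← Finset.sum_add_distrib]
    exact Finset.sum_congr rfl fun x _ => by ring
  linarith

lemma nderiv_eq (μ : V → V → ℝ) (Ω : Finset V)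
    (hsym : ∀ x y, μ x y = μ y x) (hnn : ∀ x y, 0 ≤ μ x y)
    (hm : ∀ x ∈ clos μ Ω, 0 < vm μ Ω x) (u v : V → ℝ) (hu : IsHarmonic μ Ω u)
    (hv : IsHarmonic μ Ω v) (huv : ∀ y ∈ bdry μ Ω, u y = v y) :
    ∀ x ∈ bdry μ Ω, nderiv μ Ω u x = nderiv μ Ω v x := by
  have hw : IsHarmonic μ Ω (fun x => u x - v x) := by
    rw [harm_iff μ Ω hm] at *
    intro x hx
    have : ∑ y, μ x y * ((u y - v y) - (u x - v x))
        = ∑ y, μ x y * (u y - u x) - ∑ y, μ x y * (v y - v x) := by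
      rw [← Finset.sum_sub_distrib]
      exact Finset.sum_congr rfl fun y _ => by ring
    rw [this, hu x hx, hv x hx, sub_zero]
  have h := l2_bound μ Ω hsym hnn hm _ hw
  have hpos : ∀ x ∈ bdry μ Ω, 0 < vm μ Ω x := fun x hx => hm x (Finset.mem_union_right _ hx)
  have h0 : ∑ x ∈ bdry μ Ω, (u x - v x) ^ 2 * vm μ Ω x = 0 :=
    Finset.sum_eq_zero fun x hx => by rw [huv x hx]; ring
  rw [h0] at h
  have hnon : ∀ x ∈ bdry μ Ω, 0 ≤ nderiv μ Ω (fun x => u x - v x) x ^ 2 * vm μ Ω x :=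
    fun x hx => mul_nonneg (sq_nonneg _) (hpos x hx).le
  have h1 := (Finset.sum_eq_zero_iff_of_nonneg hnon).1 (le_antisymm h (Finset.sum_nonneg hnon))
  intro x hx
  have h2 : nderiv μ Ω (fun x => u x - v x) x = 0 := by
    have := h1 x hx
    rw [mul_eq_zero] at this
    rcases this with h | h
    · exact pow_eq_zero_iff (two_ne_zero) |>.1 h
    · exact absurd h (hpos x hx).ne'
  have h3 : nderiv μ Ω (fun x => u x - v x) x = nderiv μ Ω u x - nderiv μ Ω v x := by
    unfold nderiv
    rw [← sub_div, ← Finset.sum_sub_distrib]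
    congr 1
    exact Finset.sum_congr rfl fun y _ => by ring
  linarith

lemma linf_bound (μ : V → V → ℝ) (Ω : Finset V)
    (hsym : ∀ x y, μ x y = μ y x) (hnn : ∀ x y, 0 ≤ μ x y)
    (hm : ∀ x ∈ clos μ Ω, 0 < vm μ Ω x) (u : V → ℝ) (hu : IsHarmonic μ Ω u)
    (C : ℝ) (hC : ∀ y ∈ bdry μ Ω, |u y| ≤ C) :
    ∀ x ∈ bdry μ Ω, |nderiv μ Ω u x| ≤ 2 * C := by
  intro x hx
  have hC0 : 0 ≤ C := (abs_nonneg _).trans (hC x hx)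
  obtain ⟨v, hv, hvC, hvu⟩ := exists_harm μ Ω hnn hm u C hC0 hC
  rw [← nderiv_eq μ Ω hsym hnn hm v u hv hu hvu x hx]
  have hp := hm x (Finset.mem_union_right _ hx)
  rw [nderiv, abs_div, abs_of_pos hp, div_le_iff₀ hp, vm_bdry μ Ω hx, Finset.mul_sum]
  refine (Finset.abs_sum_le_sum_abs _ _).trans (Finset.sum_le_sum fun y _ => ?_)
  rw [abs_mul, abs_of_nonneg (hnn x y), mul_comm]
  refine mul_le_mul_of_nonneg_right ?_ (hnn x y)
  have := abs_sub (v x) (v y)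
  linarith [hvC x, hvC y]

lemma exists_kernel (μ : V → V → ℝ) (Ω : Finset V)
    (hsym : ∀ x y, μ x y = μ y x) (hnn : ∀ x y, 0 ≤ μ x y)
    (hm : ∀ x ∈ clos μ Ω, 0 < vm μ Ω x) :
    ∃ K : V → V → ℝ, (∀ u : V → ℝ, IsHarmonic μ Ω u →
      ∀ x ∈ bdry μ Ω, nderiv μ Ω u x = ∑ y ∈ bdry μ Ω, K x y * u y) ∧
      (∀ f : V → ℝ, ∑ x ∈ bdry μ Ω, (∑ y ∈ bdry μ Ω, K x y * f y) ^ 2 * vm μ Ω x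
        ≤ ∑ x ∈ bdry μ Ω, f x ^ 2 * vm μ Ω x) ∧
      ∀ x ∈ bdry μ Ω, ∑ y ∈ bdry μ Ω, |K x y| ≤ 2 := by
  have hex : ∀ w : V, ∃ v : V → ℝ, IsHarmonic μ Ω v ∧ (∀ x, |v x| ≤ 1) ∧
      ∀ y ∈ bdry μ Ω, v y = if y = w then 1 else 0 := fun w =>
    exists_harm μ Ω hnn hm (fun y => if y = w then 1 else 0) 1 zero_le_one (by
      intro y _
      by_cases h : y = w <;> simp [h])
  choose H hH _ hHb using hex
  let K : V → V → ℝ := fun x w => nderiv μ Ω (H w) x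
  have hK : ∀ u : V → ℝ, IsHarmonic μ Ω u →
      ∀ x ∈ bdry μ Ω, nderiv μ Ω u x = ∑ y ∈ bdry μ Ω, K x y * u y := by
    intro u hu x hx
    have hw : IsHarmonic μ Ω (fun z => ∑ w ∈ bdry μ Ω, H w z * u w) := by
      rw [harm_iff μ Ω hm]
      intro z hz
      have : ∑ y, μ z y * (∑ w ∈ bdry μ Ω, H w y * u w - ∑ w ∈ bdry μ Ω, H w z * u w)
          = ∑ w ∈ bdry μ Ω, (∑ y, μ z y * (H w y - H w z)) * u w := by
        simp only [← Finset.sum_sub_distrib, Finset.mul_sum, Finset.sum_mul]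
        rw [Finset.sum_comm]
        exact Finset.sum_congr rfl fun w _ => Finset.sum_congr rfl fun y _ => by ring
      rw [this]
      refine Finset.sum_eq_zero fun w _ => ?_
      rw [(harm_iff μ Ω hm _).1 (hH w) z hz, zero_mul]
    have hb : ∀ y ∈ bdry μ Ω, u y = (fun z => ∑ w ∈ bdry μ Ω, H w z * u w) y := by
      intro y hy
      simp only
      rw [Finset.sum_eq_single y]
      · simp [hHb y y hy]
      · intro w _ hwy
        simp [hHb w y hy, hwy.symm]
      · exact fun h => absurd hy h
    rw [nderiv_eq μ Ω hsym hnn hm u _ hu hw hb x hx]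
    simp only [K, nderiv]
    simp only [← Finset.sum_sub_distrib, Finset.mul_sum, Finset.sum_div, Finset.sum_mul]
    rw [Finset.sum_comm]
    exact Finset.sum_congr rfl fun w _ => Finset.sum_congr rfl fun y _ => by ring
  have hext : ∀ f : V → ℝ, ∃ v : V → ℝ, IsHarmonic μ Ω v ∧ ∀ y ∈ bdry μ Ω, v y = f y := by
    intro f
    obtain ⟨v, h1, _, h2⟩ := exists_harm μ Ω hnn hm f (∑ y, |f y|)
      (Finset.sum_nonneg fun _ _ => abs_nonneg _)
      (fun y _ => Finset.single_le_sum (f := fun y => |f y|) (fun _ _ => abs_nonneg _)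
        (Finset.mem_univ y))
    exact ⟨v, h1, h2⟩
  have hKf : ∀ f v : V → ℝ, IsHarmonic μ Ω v → (∀ y ∈ bdry μ Ω, v y = f y) →
      ∀ x ∈ bdry μ Ω, nderiv μ Ω v x = ∑ y ∈ bdry μ Ω, K x y * f y := by
    intro f v hv hvf x hx
    rw [hK v hv x hx]
    exact Finset.sum_congr rfl fun y hy => by rw [hvf y hy]
  refine ⟨K, hK, ?_, ?_⟩
  · intro f
    obtain ⟨v, hv, hvf⟩ := hext f
    have h := l2_bound μ Ω hsym hnn hm v hv
    calc _ = ∑ x ∈ bdry μ Ω, nderiv μ Ω v x ^ 2 * vm μ Ω x :=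
          Finset.sum_congr rfl fun x hx => by rw [hKf f v hv hvf x hx]
      _ ≤ _ := h
      _ = _ := Finset.sum_congr rfl fun x hx => by rw [hvf x hx]
  · intro x hx
    obtain ⟨v, hv, hvf⟩ := hext (fun y => if 0 ≤ K x y then 1 else -1)
    have h := linf_bound μ Ω hsym hnn hm v hv 1 (by
      intro y hy
      rw [hvf y hy]
      by_cases h : 0 ≤ K x y <;> simp [h]) x hx
    rw [hKf _ v hv hvf x hx] at h
    calc _ = ∑ y ∈ bdry μ Ω, K x y * (if 0 ≤ K x y then 1 else -1) := by
          refine Finset.sum_congr rfl fun y _ => ?_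
          by_cases h : 0 ≤ K x y
          · simp [h, abs_of_nonneg h]
          · simp [h, abs_of_neg (not_le.1 h)]
      _ ≤ _ := le_abs_self _
      _ ≤ _ := h
      _ = 2 := by norm_num

/-- The analytic family `z ↦ sgn t · |t|^(c z + d)`, as an exponential. -/
noncomputable def anaPow (c d t : ℝ) (z : ℂ) : ℂ :=
  (Real.sign t : ℂ) * Complex.exp (((c : ℂ) * z + d) * (Real.log |t| : ℝ))

lemma anaPow_differentiable (c d t : ℝ) : Differentiable ℂ (anaPow c d t) := by
  unfold anaPow
  fun_prop

lemma anaPow_norm (c d t : ℝ) (z : ℂ) (ht : t ≠ 0) :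
    ‖anaPow c d t z‖ = |t| ^ (c * z.re + d) := by
  have h : ‖(Real.sign t : ℂ)‖ = 1 := by
    rcases Real.sign_apply_eq_of_ne_zero t ht with h | h <;> simp [h]
  rw [anaPow, norm_mul, h, one_mul, Complex.norm_exp, Real.rpow_def_of_pos (abs_pos.2 ht)]
  congr 1
  simp
  ring

lemma anaPow_zero (c d : ℝ) (z : ℂ) : anaPow c d 0 z = 0 := by
  simp [anaPow]

lemma anaPow_norm_le (c d t : ℝ) (z : ℂ) : ‖anaPow c d t z‖ ≤ |t| ^ (c * z.re + d) := by
  by_cases ht : t = 0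
  · subst ht
    rw [anaPow_zero, norm_zero]
    positivity
  · exact (anaPow_norm c d t z ht).le

lemma anaPow_real (c d t r : ℝ) :
    anaPow c d t (r : ℂ) = ((Real.sign t * |t| ^ (c * r + d) : ℝ) : ℂ) := by
  by_cases ht : t = 0
  · subst ht
    simp [anaPow_zero]
  · rw [anaPow, Real.rpow_def_of_pos (abs_pos.2 ht)]
    push_cast
    congr 2
    ring

lemma anaPow_bdd (c d t : ℝ) : ∃ M, 0 ≤ M ∧ ∀ z : ℂ, 0 ≤ z.re → z.re ≤ 1 →
    ‖anaPow c d t z‖ ≤ M := by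
  by_cases ht : t = 0
  · exact ⟨0, le_rfl, fun z _ _ => by subst ht; simp [anaPow_zero]⟩
  refine ⟨Real.exp (abs (Real.log (abs t)) * (|c| + |d|)), (Real.exp_pos _).le, fun z h0 h1 => ?_⟩
  rw [anaPow_norm c d t z ht, Real.rpow_def_of_pos (abs_pos.2 ht)]
  apply Real.exp_le_exp.2
  refine (le_abs_self _).trans ?_
  rw [abs_mul]
  refine mul_le_mul_of_nonneg_left ?_ (abs_nonneg _)
  refine (abs_add_le _ _).trans ?_
  rw [abs_mul, abs_of_nonneg h0]
  have := mul_le_mul_of_nonneg_left h1 (abs_nonneg c)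
  linarith

lemma riesz_thorin {V : Type*} (s : Finset V) (m : V → ℝ) (hm : ∀ x ∈ s, 0 < m x)
    (K : V → V → ℝ)
    (h2 : ∀ f : V → ℝ, ∑ x ∈ s, (∑ y ∈ s, K x y * f y) ^ 2 * m x ≤ ∑ x ∈ s, f x ^ 2 * m x)
    (hinf : ∀ x ∈ s, ∑ y ∈ s, |K x y| ≤ 2)
    (θ : ℝ) (h0 : 0 < θ) (h1 : θ < 1) (φ : V → ℝ) :
    (∑ x ∈ s, |∑ y ∈ s, K x y * φ y| ^ ((2 : ℝ) / θ) * m x) ^ (θ / 2) ≤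
      2 ^ ((1 : ℝ) - θ) * (∑ x ∈ s, |φ x| ^ ((2 : ℝ) / θ) * m x) ^ (θ / 2) := by
  set g : V → ℝ := fun x => ∑ y ∈ s, K x y * φ y with hg
  set N := ∑ x ∈ s, |φ x| ^ ((2 : ℝ) / θ) * m x with hN
  set G := ∑ x ∈ s, |g x| ^ ((2 : ℝ) / θ) * m x with hG
  have hN0 : 0 ≤ N := Finset.sum_nonneg fun x hx =>
    mul_nonneg (Real.rpow_nonneg (abs_nonneg _) _) (hm x hx).le
  have hG0 : 0 ≤ G := Finset.sum_nonneg fun x hx =>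
    mul_nonneg (Real.rpow_nonneg (abs_nonneg _) _) (hm x hx).le
  change G ^ (θ / 2) ≤ 2 ^ ((1 : ℝ) - θ) * N ^ (θ / 2)
  rcases hG0.eq_or_lt with hGz | hGp
  · rw [← hGz, Real.zero_rpow (by positivity)]
    positivity
  let A : V → ℂ → ℂ := fun y => anaPow (1 / θ) 0 (φ y)
  let B : V → ℂ → ℂ := fun x => anaPow (-(1 / θ)) (2 / θ) (g x)
  let F : ℂ → ℂ := fun z => ∑ x ∈ s, (m x : ℂ) * B x z * ∑ y ∈ s, (K x y : ℂ) * A y z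
  have hFd : Differentiable ℂ F := by
    have hA : ∀ y, Differentiable ℂ (A y) := fun y => anaPow_differentiable _ _ _
    have hB : ∀ y, Differentiable ℂ (B y) := fun y => anaPow_differentiable _ _ _
    refine Differentiable.fun_sum fun x _ => ?_
    refine ((hB x).const_mul _).mul ?_
    exact Differentiable.fun_sum fun y _ => (hA y).const_mul _
  have hFb : BddAbove ((norm ∘ F) '' Complex.HadamardThreeLines.verticalClosedStrip 0 1) := by
    choose MA hMA0 hMA using fun y => anaPow_bdd (1 / θ) 0 (φ y)
    choose MB hMB0 hMB using fun x => anaPow_bdd (-(1 / θ)) (2 / θ) (g x)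
    refine ⟨∑ x ∈ s, |m x| * MB x * ∑ y ∈ s, |K x y| * MA y, ?_⟩
    rintro _ ⟨z, hz, rfl⟩
    have hz' : 0 ≤ z.re ∧ z.re ≤ 1 := hz
    refine (norm_sum_le _ _).trans (Finset.sum_le_sum fun x _ => ?_)
    rw [norm_mul, norm_mul, Complex.norm_real, Real.norm_eq_abs]
    refine mul_le_mul (mul_le_mul_of_nonneg_left (hMB x z hz'.1 hz'.2) (abs_nonneg _)) ?_
      (norm_nonneg _) (mul_nonneg (abs_nonneg _) (hMB0 x))
    refine (norm_sum_le _ _).trans (Finset.sum_le_sum fun y _ => ?_)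
    rw [norm_mul, Complex.norm_real, Real.norm_eq_abs]
    exact mul_le_mul_of_nonneg_left (hMA y z hz'.1 hz'.2) (abs_nonneg _)
  have ha : ∀ z ∈ Complex.re ⁻¹' {(0 : ℝ)}, ‖F z‖ ≤ 2 * G := by
    intro z hz
    have hz : z.re = 0 := hz
    rw [hG, Finset.mul_sum]
    refine (norm_sum_le _ _).trans (Finset.sum_le_sum fun x hx => ?_)
    rw [norm_mul, norm_mul, Complex.norm_real, Real.norm_eq_abs, abs_of_pos (hm x hx)]
    have hB : ‖B x z‖ ≤ |g x| ^ (2 / θ) := by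
      have := anaPow_norm_le (-(1 / θ)) (2 / θ) (g x) z
      rwa [hz, mul_zero, zero_add] at this
    have hA : ‖∑ y ∈ s, (K x y : ℂ) * A y z‖ ≤ 2 := by
      refine (norm_sum_le _ _).trans ((Finset.sum_le_sum fun y _ => ?_).trans (hinf x hx))
      rw [norm_mul, Complex.norm_real, Real.norm_eq_abs]
      have := anaPow_norm_le (1 / θ) 0 (φ y) z
      rw [hz, mul_zero, zero_add, Real.rpow_zero] at this
      exact mul_le_of_le_one_right (abs_nonneg _) this
    calc _ ≤ m x * |g x| ^ (2 / θ) * 2 := by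
          refine mul_le_mul (mul_le_mul_of_nonneg_left hB (hm x hx).le) hA (norm_nonneg _) ?_
          exact mul_nonneg (hm x hx).le (Real.rpow_nonneg (abs_nonneg _) _)
      _ = _ := by ring
  have hsq : ∀ t : ℝ, (|t| ^ (1 / θ)) ^ 2 = |t| ^ (2 / θ) := by
    intro t
    rw [← Real.rpow_natCast, ← Real.rpow_mul (abs_nonneg _)]
    congr 1
    push_cast
    ring
  have hb : ∀ z ∈ Complex.re ⁻¹' {(1 : ℝ)}, ‖F z‖ ≤ (G * N) ^ ((1 : ℝ) / 2) := by
    intro z hz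
    have hz : z.re = 1 := hz
    rw [← Real.sqrt_eq_rpow]
    apply Real.le_sqrt_of_sq_le
    have hB : ∀ x, ‖B x z‖ ^ 2 ≤ |g x| ^ (2 / θ) := by
      intro x
      have := anaPow_norm_le (-(1 / θ)) (2 / θ) (g x) z
      rw [hz, show -(1 / θ) * 1 + 2 / θ = 1 / θ by ring] at this
      rw [← hsq]
      exact pow_le_pow_left₀ (norm_nonneg _) this 2
    have hA : ∀ x, ‖A x z‖ ^ 2 ≤ |φ x| ^ (2 / θ) := by
      intro x
      have := anaPow_norm_le (1 / θ) 0 (φ x) z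
      rw [hz, mul_one, add_zero] at this
      rw [← hsq]
      exact pow_le_pow_left₀ (norm_nonneg _) this 2
    have hns : ∀ w : ℂ, ‖w‖ ^ 2 = w.re ^ 2 + w.im ^ 2 := by
      intro w
      rw [Complex.sq_norm, Complex.normSq_apply]; ring
    have hKA : ∑ x ∈ s, ‖∑ y ∈ s, (K x y : ℂ) * A y z‖ ^ 2 * m x ≤ N := by
      have r1 := h2 (fun y => (A y z).re)
      have r2 := h2 (fun y => (A y z).im)
      calc _ = ∑ x ∈ s, (∑ y ∈ s, K x y * (A y z).re) ^ 2 * m x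
            + ∑ x ∈ s, (∑ y ∈ s, K x y * (A y z).im) ^ 2 * m x := by
            rw [← Finset.sum_add_distrib]
            refine Finset.sum_congr rfl fun x _ => ?_
            rw [hns, Complex.re_sum, Complex.im_sum]
            simp only [Complex.re_ofReal_mul, Complex.im_ofReal_mul]
            ring
        _ ≤ ∑ x ∈ s, (A x z).re ^ 2 * m x + ∑ x ∈ s, (A x z).im ^ 2 * m x := add_le_add r1 r2
        _ = ∑ x ∈ s, ‖A x z‖ ^ 2 * m x := by
            rw [← Finset.sum_add_distrib]
            refine Finset.sum_congr rfl fun x _ => ?_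
            rw [hns]; ring
        _ ≤ N := Finset.sum_le_sum fun x hx => mul_le_mul_of_nonneg_right (hA x) (hm x hx).le
    have hBG : ∑ x ∈ s, ‖B x z‖ ^ 2 * m x ≤ G :=
      Finset.sum_le_sum fun x hx => mul_le_mul_of_nonneg_right (hB x) (hm x hx).le
    calc ‖F z‖ ^ 2 ≤ (∑ x ∈ s, m x * ‖B x z‖ * ‖∑ y ∈ s, (K x y : ℂ) * A y z‖) ^ 2 := by
          refine pow_le_pow_left₀ (norm_nonneg _) ?_ 2
          refine (norm_sum_le _ _).trans (Finset.sum_le_sum fun x hx => ?_)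
          rw [norm_mul, norm_mul, Complex.norm_real, Real.norm_eq_abs, abs_of_pos (hm x hx)]
      _ ≤ (∑ x ∈ s, ‖B x z‖ ^ 2 * m x) *
            ∑ x ∈ s, ‖∑ y ∈ s, (K x y : ℂ) * A y z‖ ^ 2 * m x := by
          refine Finset.sum_sq_le_sum_mul_sum_of_sq_eq_mul s ?_ ?_ ?_
          · exact fun x hx => mul_nonneg (sq_nonneg _) (hm x hx).le
          · exact fun x hx => mul_nonneg (sq_nonneg _) (hm x hx).le
          · intro x _
            ring
      _ ≤ G * N := by
          refine mul_le_mul hBG hKA ?_ hG0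
          exact Finset.sum_nonneg fun x hx => mul_nonneg (sq_nonneg _) (hm x hx).le
  have hsa : ∀ t : ℝ, Real.sign t * |t| = t := by
    intro t
    rcases lt_trichotomy t 0 with h | h | h
    · rw [Real.sign_of_neg h, abs_of_neg h]; ring
    · simp [h]
    · rw [Real.sign_of_pos h, abs_of_pos h]; ring
  have hFθ : F (θ : ℂ) = (G : ℂ) := by
    have hAθ : ∀ y, A y (θ : ℂ) = (φ y : ℂ) := by
      intro y
      simp only [A]
      rw [anaPow_real, show 1 / θ * θ + 0 = 1 by field_simp; ring, Real.rpow_one, hsa]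
    have hgx : ∀ x, ∑ y ∈ s, (K x y : ℂ) * A y (θ : ℂ) = (g x : ℂ) := by
      intro x
      simp only [hAθ, hg]
      push_cast
      rfl
    simp only [F, hgx, hG]
    push_cast
    refine Finset.sum_congr rfl fun x _ => ?_
    simp only [B]
    rw [anaPow_real]
    norm_cast
    rw [show -(1 / θ) * θ + 2 / θ = 2 / θ - 1 by field_simp; ring]
    by_cases hgz : g x = 0
    · have : (2 : ℝ) / θ ≠ 0 := by positivity
      simp [hgz, Real.zero_rpow this]
    · have hp := abs_pos.2 hgz
      have e : |g x| ^ (2 / θ) = |g x| ^ (2 / θ - 1) * |g x| := by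
        rw [Real.rpow_sub_one hp.ne']
        field_simp
      have e2 : Real.sign (g x) * g x = |g x| := by
        rcases lt_or_gt_of_ne hgz with h | h
        · rw [Real.sign_of_neg h, abs_of_neg h]; ring
        · rw [Real.sign_of_pos h, abs_of_pos h]; ring
      rw [e]
      nth_rewrite 3 [← e2]
      ring
  have key := Complex.HadamardThreeLines.norm_le_interp_of_mem_verticalClosedStrip₀₁' F
    (z := (θ : ℂ)) (a := 2 * G) (b := (G * N) ^ ((1 : ℝ) / 2))
    (by
      change (θ : ℂ).re ∈ Set.Icc (0 : ℝ) 1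
      rw [Complex.ofReal_re]
      exact ⟨h0.le, h1.le⟩) hFd.diffContOnCl hFb ha hb
  rw [hFθ, Complex.norm_real, Real.norm_eq_abs, abs_of_pos hGp, Complex.ofReal_re,
    ← Real.rpow_mul (mul_nonneg hG0 hN0), Real.mul_rpow zero_le_two hG0,
    Real.mul_rpow hG0 hN0, show (1 : ℝ) / 2 * θ = θ / 2 by ring] at key
  have e : G = G ^ (1 - θ) * G ^ (θ / 2) * G ^ (θ / 2) := by
    rw [← Real.rpow_add hGp, ← Real.rpow_add hGp]
    ring_nf
    exact (Real.rpow_one G).symm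
  have hpos : 0 < G ^ (1 - θ) * G ^ (θ / 2) := by positivity
  refine le_of_mul_le_mul_left ?_ hpos
  calc G ^ (1 - θ) * G ^ (θ / 2) * G ^ (θ / 2) = G := e.symm
    _ ≤ _ := key
    _ = _ := by ring

/-- Corollary 3.3 (interpolation): for θ ∈ [0,1) and p = 2/θ (p = ∞ when θ = 0),
‖Λφ‖_{ℓ^p(δΩ,m)} ≤ 2^{1−θ} ‖φ‖_{ℓ^p(δΩ,m)}. -/
theorem stmt_9 (μ : V → V → ℝ) (Ω : Finset V)
    (hsym : ∀ x y, μ x y = μ y x) (hnn : ∀ x y, 0 ≤ μ x y)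
    (hm : ∀ x ∈ clos μ Ω, 0 < vm μ Ω x) :
    ∀ θ : ℝ, 0 ≤ θ → θ < 1 →
      ∀ u : V → ℝ, IsHarmonic μ Ω u →
        (θ = 0 → ∀ C : ℝ, (∀ y ∈ bdry μ Ω, |u y| ≤ C) →
          ∀ x ∈ bdry μ Ω, |nderiv μ Ω u x| ≤ 2 ^ ((1 : ℝ) - θ) * C) ∧
        (0 < θ →
          (∑ x ∈ bdry μ Ω, |nderiv μ Ω u x| ^ ((2 : ℝ) / θ) * vm μ Ω x) ^ (θ / 2) ≤
            2 ^ ((1 : ℝ) - θ) *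
              (∑ x ∈ bdry μ Ω, |u x| ^ ((2 : ℝ) / θ) * vm μ Ω x) ^ (θ / 2)) := by
  intro θ hθ0 hθ1 u hu
  constructor
  · intro h C hC x hx
    rw [h, sub_zero, Real.rpow_one]
    exact linf_bound μ Ω hsym hnn hm u hu C hC x hx
  · intro h
    obtain ⟨K, hK, hK2, hKinf⟩ := exists_kernel μ Ω hsym hnn hm
    have key := riesz_thorin (bdry μ Ω) (vm μ Ω)
      (fun x hx => hm x (Finset.mem_union_right _ hx)) K hK2 hKinf θ h hθ1 u
    have e : ∑ x ∈ bdry μ Ω, |nderiv μ Ω u x| ^ ((2 : ℝ) / θ) * vm μ Ω x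
        = ∑ x ∈ bdry μ Ω, |∑ y ∈ bdry μ Ω, K x y * u y| ^ ((2 : ℝ) / θ) * vm μ Ω x :=
      Finset.sum_congr rfl fun x hx => by rw [hK u hu x hx]
    rw [e]
    exact key
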